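/- arXiv:1805.12164 — 2 statements merged into one kernel-verified Lean document; each statement's English description precedes it below -/
import Mathlib

section
/- Let i, j : Fin n and let vᵢ, vⱼ, vᵢ', vⱼ' ∈ EuclideanSpace ℝ (Fin k) satisfy ⟪vᵢ, vᵢ'⟫ = PMI i i, ⟪vⱼ, vⱼ'⟫ = PMI j j, ⟪vᵢ, vⱼ'⟫ = PMI i j, and ⟪vⱼ, vᵢ'⟫ = PMI j i. Assume the joint probabilities are symmetric: q i j = q j i. Then Real.log (q i j) = -(⟪vᵢ - vⱼ, vᵢ' - vⱼ'⟫ / 2) + Real.log (q i i * q j j) / 2. -/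
open scoped RealInnerProductSpace

section InnerProduct

variable {𝕜 E : Type*} [RCLike 𝕜] [SeminormedAddCommGroup E] [InnerProductSpace 𝕜 E]

theorem inner_sub_sub (x y x' y' : E) :
    inner 𝕜 (x - y) (x' - y') =
      inner 𝕜 x x' + inner 𝕜 y y' - (inner 𝕜 x y' + inner 𝕜 y x') := by
  simp only [inner_sub_left, inner_sub_right]
  ring

end InnerProduct

section PointwiseMutualInformation

variable {ι : Type*} {p : ι → ℝ} {q : ι → ι → ℝ} {i j : ι}

/-- The pointwise mutual information of the words `i` and `j`, for marginal probabilities `p` and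
joint probabilities `q`. If one of `q i j`, `p i`, `p j` vanishes it has the junk value `0`. -/
noncomputable def pmi (p : ι → ℝ) (q : ι → ι → ℝ) (i j : ι) : ℝ :=
  Real.log (q i j / (p i * p j))

theorem pmi_eq_log_sub (hpi : p i ≠ 0) (hpj : p j ≠ 0) (hq : q i j ≠ 0) :
    pmi p q i j = Real.log (q i j) - (Real.log (p i) + Real.log (p j)) := by
  rw [pmi, Real.log_div hq (mul_ne_zero hpi hpj), Real.log_mul hpi hpj]

theorem pmi_self_add_pmi_self_sub (hpi : p i ≠ 0) (hpj : p j ≠ 0) (hqii : q i i ≠ 0)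
    (hqjj : q j j ≠ 0) (hqij : q i j ≠ 0) (hqji : q j i ≠ 0) :
    pmi p q i i + pmi p q j j - (pmi p q i j + pmi p q j i) =
      Real.log (q i i * q j j) - (Real.log (q i j) + Real.log (q j i)) := by
  rw [pmi_eq_log_sub hpi hpi hqii, pmi_eq_log_sub hpj hpj hqjj, pmi_eq_log_sub hpi hpj hqij,
    pmi_eq_log_sub hpj hpi hqji, Real.log_mul hqii hqjj]
  ring

theorem corollary1_joint_general {E : Type*} [SeminormedAddCommGroup E] [InnerProductSpace ℝ E]
    (hpi : 0 < p i) (hpj : 0 < p j)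
    (hqii : 0 < q i i) (hqjj : 0 < q j j) (hqij : 0 < q i j) (hqji : 0 < q j i)
    {vi vj vi' vj' : E}
    (hii : ⟪vi, vi'⟫ = pmi p q i i) (hjj : ⟪vj, vj'⟫ = pmi p q j j)
    (hij : ⟪vi, vj'⟫ = pmi p q i j) (hji : ⟪vj, vi'⟫ = pmi p q j i) :
    Real.log (q i j) + Real.log (q j i) =
      -⟪vi - vj, vi' - vj'⟫ + Real.log (q i i * q j j) := by
  have inner_eq : ⟪vi - vj, vi' - vj'⟫ =
      Real.log (q i i * q j j) - (Real.log (q i j) + Real.log (q j i)) := by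
    rw [inner_sub_sub, hii, hjj, hij, hji]
    exact pmi_self_add_pmi_self_sub hpi.ne' hpj.ne' hqii.ne' hqjj.ne' hqij.ne' hqji.ne'
  linarith

end PointwiseMutualInformation

/-- Second equation of the paper's Corollary 1: the log joint probability of
a word pair is recovered from the inner product of differences of their
target and context vectors together with their self-joint probabilities. -/
theorem corollary1_joint (n k : ℕ) (hn : 0 < n) (hk : 0 < k)
    (p : Fin n → ℝ) (q : Fin n → Fin n → ℝ)
    (hp : ∀ i, 0 < p i) (hq : ∀ i j, 0 < q i j)
    (i j : Fin n)
    (vi vj vi' vj' : EuclideanSpace ℝ (Fin k))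
    (hii : ⟪vi, vi'⟫ = Real.log (q i i / (p i * p i)))
    (hjj : ⟪vj, vj'⟫ = Real.log (q j j / (p j * p j)))
    (hij : ⟪vi, vj'⟫ = Real.log (q i j / (p i * p j)))
    (hji : ⟪vj, vi'⟫ = Real.log (q j i / (p j * p i)))
    (hsym : q i j = q j i) :
    Real.log (q i j) = -(⟪vi - vj, vi' - vj'⟫ / 2) + Real.log (q i i * q j j) / 2 := by
  have log_add_log := corollary1_joint_general (hp i) (hp j) (hq i i) (hq j j) (hq i j) (hq j i)
    hii hjj hij hji
  rw [← hsym] at log_add_log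
  linarith
end

section
/- Let s, t : Fin k → ℝ be vectors with ∑ m, s m * t m = 0 and ∑ m, (t m)^2 = 1, and let d be a real number with 0 ≤ d and d^2 < ∑ m, (s m)^2. Set b := Real.sqrt ((∑ m, (s m)^2) - d^2), and define complex vectors v, v' : Fin k → ℂ by v m := (s m : ℂ) + b * Complex.I * (t m : ℂ) and v' m := (s m : ℂ) - b * Complex.I * (t m : ℂ). Then: (i) v' m = starRingEnd ℂ (v m) for every m (v and v' are componentwise complex conjugates); (ii) ∑ m, starRingEnd ℂ (v m) * v' m = (d^2 : ℂ); and (iii) ∑ m, Complex.normSq (v m) = ∑ m, Complex.normSq (v' m) (v and v' have equal norms). -/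
/-!
Since `v' = conj v`, each product `conj (v m) * v' m` is the square `(v' m) ^ 2`, not a squared
modulus. In `∑ m, (v' m) ^ 2` the cross term vanishes by orthogonality and the imaginary part
`b t` contributes `-b ^ 2`, which brings `‖s‖ ^ 2` down to `d ^ 2`.
-/

section

variable {ι : Type*} (S : Finset ι)

lemma sum_sub_mul_sq {R : Type*} [CommRing R] (c : R) (x y : ι → R) :
    ∑ m ∈ S, (x m - c * y m) ^ 2 =
      ∑ m ∈ S, x m ^ 2 - 2 * c * ∑ m ∈ S, x m * y m + c ^ 2 * ∑ m ∈ S, y m ^ 2 := by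
  simp only [Finset.mul_sum, ← Finset.sum_sub_distrib, ← Finset.sum_add_distrib]
  exact Finset.sum_congr rfl fun m _ => by ring

lemma conj_ofReal_add_mul_I_mul_ofReal (x b y : ℝ) :
    starRingEnd ℂ ((x : ℂ) + (b : ℂ) * Complex.I * (y : ℂ)) =
      (x : ℂ) - (b : ℂ) * Complex.I * (y : ℂ) := by
  simp [sub_eq_add_neg]

lemma sum_ofReal_sub_mul_I_mul_ofReal_sq_of_orthogonal (b : ℝ) {x y : ι → ℝ}
    (hxy : ∑ m ∈ S, x m * y m = 0) :
    ∑ m ∈ S, ((x m : ℂ) - (b : ℂ) * Complex.I * (y m : ℂ)) ^ 2 =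
      ((∑ m ∈ S, x m ^ 2 - b ^ 2 * ∑ m ∈ S, y m ^ 2 : ℝ) : ℂ) := by
  have hxy_complex : ∑ m ∈ S, (x m : ℂ) * (y m : ℂ) = 0 := by exact_mod_cast hxy
  rw [sum_sub_mul_sq, hxy_complex, mul_pow, Complex.I_sq]
  push_cast
  ring

end

/-- The paper's Theorem 2 (Section 3.5, case (iii)): when a word's required
minimum length d is shorter than the norm of the real component s, the word's
target and context vectors arise as a complex-conjugate pair
v = s + i b t̂, v' = s − i b t̂, sharing the real component s, having equal
norms, and with Hermitian inner product equal to d². -/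
theorem complex_conjugate_vectors (k : ℕ) (s t : Fin k → ℝ)
    (hst : ∑ m, s m * t m = 0) (ht : ∑ m, (t m) ^ 2 = 1)
    (d : ℝ) (hd : 0 ≤ d) (hds : d ^ 2 < ∑ m, (s m) ^ 2)
    (b : ℝ) (hb : b = Real.sqrt ((∑ m, (s m) ^ 2) - d ^ 2))
    (v v' : Fin k → ℂ)
    (hv : ∀ m, v m = (s m : ℂ) + (b : ℂ) * Complex.I * (t m : ℂ))
    (hv' : ∀ m, v' m = (s m : ℂ) - (b : ℂ) * Complex.I * (t m : ℂ)) :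
    (∀ m, v' m = starRingEnd ℂ (v m)) ∧
    (∑ m, starRingEnd ℂ (v m) * v' m = (d ^ 2 : ℂ)) ∧
    (∑ m, Complex.normSq (v m) = ∑ m, Complex.normSq (v' m)) := by
  have hconj (m : Fin k) : v' m = starRingEnd ℂ (v m) := by
    rw [hv, hv', conj_ofReal_add_mul_I_mul_ofReal]
  have hb_sq : b ^ 2 = ∑ m, (s m) ^ 2 - d ^ 2 := by
    rw [hb, Real.sq_sqrt (sub_nonneg.mpr hds.le)]
  refine ⟨hconj, ?_, ?_⟩
  · calc ∑ m, starRingEnd ℂ (v m) * v' m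
        = ∑ m, ((s m : ℂ) - (b : ℂ) * Complex.I * (t m : ℂ)) ^ 2 := by
          simp only [← hconj, hv', sq]
      _ = ((∑ m, s m ^ 2 - b ^ 2 * ∑ m, t m ^ 2 : ℝ) : ℂ) :=
          sum_ofReal_sub_mul_I_mul_ofReal_sq_of_orthogonal _ b hst
      _ = (d ^ 2 : ℂ) := by
          rw [ht, mul_one, hb_sq, sub_sub_cancel, Complex.ofReal_pow]
  · simp only [hconj, Complex.normSq_conj]
end
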